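/- arXiv:1502.03885 — 7 statements merged into one kernel-verified Lean document; each statement's English description precedes it below -/
import Mathlib

section
/- Let K be a field with separable closure K_s inside a fixed algebraic closure K̃, and let M be a subfield of K̃ containing K. Let L be a finite separable extension of K inside K_s that admits a K-embedding into M, let p ∈ K[Z] be a monic separable polynomial, and let P be the set of all roots of p in K_s. Then there exist a subset I of P and a K-embedding ψ : L(I) → M such that I = P ∩ L(I) and ψ(I) = P ∩ M. -/
/-!
The given embedding `L → M` extends to a `K`-automorphism `σ` of the algebraic closure. Such a `σ`
permutes `P`, since it preserves roots of `p` and separability. Put `I = P ∩ σ⁻¹(M)`. Both `L` and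
`I` lie in the subfield `σ⁻¹(M)`, so `L(I) ⊆ σ⁻¹(M)`; hence `σ` restricts to `ψ : L(I) → M`,
`P ∩ L(I) ⊆ I`, and `ψ(I) = σ(P) ∩ M = P ∩ M`.
-/

open Polynomial


/-- **Lemma (Statement 4).** Let `K` be a field with separable closure `K_s` inside a
fixed algebraic closure `K̃`, and let `M` be a subfield of `K̃` containing `K`.  Let `L`
be a finite separable extension of `K` inside `K_s` admitting a `K`-embedding into `M`,
let `p ∈ K[Z]` be a monic separable polynomial and `P` its set of roots in `K_s`.  Then
there are a subset `I ⊆ P` and a `K`-embedding `ψ : L(I) → M` with `I = P ∩ L(I)` and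
`ψ(I) = P ∩ M`. -/
theorem exists_root_subset_and_embedding
    (K : Type*) [Field K]
    (M : IntermediateField K (AlgebraicClosure K))
    (L : IntermediateField K (AlgebraicClosure K))
    (hL : L ≤ separableClosure K (AlgebraicClosure K))
    (hLfin : FiniteDimensional K ↥L)
    (hLemb : Nonempty (↥L →ₐ[K] ↥M))
    (p : Polynomial K) (hp_monic : p.Monic) (hp_sep : p.Separable)
    (P : Set (AlgebraicClosure K))
    (hP : P = {x : AlgebraicClosure K |
      x ∈ separableClosure K (AlgebraicClosure K) ∧ (Polynomial.aeval x) p = 0}) :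
    ∃ I ⊆ P, ∃ ψ : ↥(L ⊔ IntermediateField.adjoin K I) →ₐ[K] ↥M,
      I = P ∩ ((L ⊔ IntermediateField.adjoin K I :
            IntermediateField K (AlgebraicClosure K)) : Set (AlgebraicClosure K)) ∧
      {z : AlgebraicClosure K |
          ∃ y : ↥(L ⊔ IntermediateField.adjoin K I),
            (y : AlgebraicClosure K) ∈ I ∧ ((ψ y : ↥M) : AlgebraicClosure K) = z}
        = P ∩ (M : Set (AlgebraicClosure K)) := by
  obtain ⟨φ⟩ := hLemb
  obtain ⟨s, hs⟩ := IsAlgClosed.surjective_domRestrict_of_isAlgebraic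
    (E := AlgebraicClosure K) (M.val.comp φ)
  let σ : AlgebraicClosure K ≃ₐ[K] AlgebraicClosure K :=
    AlgEquiv.ofBijective s (Algebra.IsAlgebraic.algHom_bijective s)
  have hσL : ∀ x : L, σ x = φ x := fun x => DFunLike.congr_fun hs x
  have hσP : ∀ x, σ x ∈ P ↔ x ∈ P := by
    intro x
    simp only [hP, Set.mem_ofPred_eq, mem_separableClosure_iff, IsSeparable,
      minpoly.algEquiv_eq, aeval_algEquiv, AlgHom.comp_apply]
    simp
  set I : Set (AlgebraicClosure K) := {x | x ∈ P ∧ σ x ∈ M} with hI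
  have hle : L ⊔ IntermediateField.adjoin K I ≤ M.comap σ.toAlgHom := by
    refine sup_le (fun x hx => ?_) (IntermediateField.adjoin_le_iff.2 fun x hx => hx.2)
    change σ x ∈ M
    rw [hσL ⟨x, hx⟩]
    exact (φ ⟨x, hx⟩).2
  have hIle : I ⊆ (L ⊔ IntermediateField.adjoin K I : IntermediateField K (AlgebraicClosure K)) :=
    fun x hx => (le_sup_right : _ ≤ L ⊔ IntermediateField.adjoin K I)
      (IntermediateField.subset_adjoin K I hx)
  refine ⟨I, fun x hx => hx.1,
    (σ.toAlgHom.comp (IntermediateField.val _)).codRestrict M.toSubalgebra fun y => hle y.2, ?_, ?_⟩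
  · exact Set.Subset.antisymm (fun x hx => ⟨hx.1, hIle hx⟩) fun x hx => ⟨hx.1, hle hx.2⟩
  · ext z
    constructor
    · rintro ⟨y, hy, rfl⟩
      exact ⟨(hσP y).2 hy.1, hy.2⟩
    · rintro ⟨hzP, hzM⟩
      have hz : σ (σ.symm z) = z := σ.apply_symm_apply z
      have hmem : σ.symm z ∈ I := ⟨(hσP _).1 (hz.symm ▸ hzP), hz.symm ▸ hzM⟩
      exact ⟨⟨σ.symm z, hIle hmem⟩, hmem, hz⟩
end

section
/- Let K be a field of characteristic p > 0 with separable closure K_s inside a fixed algebraic closure K̃, and let F be an intermediate field with K ⊆ F ⊆ K_s. Let f ∈ K[X] be a monic irreducible polynomial and write f(X) = g(X^q), where g ∈ K[X] is a separable (irreducible) polynomial and q is a power of p. Let F_ins denote the maximal purely inseparable extension of F in K̃ (the relative perfect closure of F in K̃). Then f has a root in F_ins if and only if g has a root in F. -/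
/-!
Since `f(x) = g(x^q)`, the `q`-th power map sends roots of `f` to roots of `g`, and every root of
`g` in the algebraic closure has a `q`-th root. If `x` is a root of `f` in `F_ins`, then `x^q` is
purely inseparable over `F`, and it is separable over `F` because it is a root of the separable
polynomial `g`; hence it lies in `F` (`separableClosure_inf_perfectClosure`).
-/

open Polynomial

/-- **Lemma (Statement 5).** Let `K` be a field of characteristic `p > 0` with separable
closure `K_s` inside a fixed algebraic closure `K̃`, and let `F` be an intermediate field
with `K ⊆ F ⊆ K_s`.  Let `f ∈ K[X]` be monic irreducible with `f(X) = g(X^q)`, where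
`g ∈ K[X]` is separable and `q` is a power of `p`.  Then `f` has a root in the maximal
purely inseparable extension `F_ins` of `F` in `K̃` if and only if `g` has a root in
`F`. -/
theorem root_in_purely_inseparable_closure_iff
    (K : Type*) [Field K] (p : ℕ) (hp : p.Prime) [CharP K p]
    (F : IntermediateField K (AlgebraicClosure K))
    (hF : F ≤ separableClosure K (AlgebraicClosure K))
    (f g : Polynomial K) (q : ℕ) (hq : ∃ k : ℕ, q = p ^ k)
    (hf_monic : f.Monic) (hf_irr : Irreducible f)
    (hg_sep : g.Separable)
    (hcomp : f = g.comp (Polynomial.X ^ q)) :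
    (∃ x : AlgebraicClosure K, (∃ k : ℕ, x ^ p ^ k ∈ F) ∧ (Polynomial.aeval x) f = 0) ↔
      (∃ y : AlgebraicClosure K, y ∈ F ∧ (Polynomial.aeval y) g = 0) := by
  obtain ⟨n, rfl⟩ := hq
  have : Fact p.Prime := ⟨hp⟩
  have : ExpChar K p := ExpChar.prime hp
  have : ExpChar F p := expChar_of_injective_algebraMap (algebraMap K F).injective p
  have haeval (x : AlgebraicClosure K) : aeval x f = aeval (x ^ p ^ n) g := by
    rw [hcomp, aeval_comp, map_pow, aeval_X]
  constructor
  · rintro ⟨x, ⟨k, hk⟩, hx⟩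
    rw [haeval] at hx
    refine ⟨x ^ p ^ n, ?_, hx⟩
    have hsep : x ^ p ^ n ∈ separableClosure F (AlgebraicClosure K) := by
      rw [mem_separableClosure_iff]
      have hK : IsSeparable K (x ^ p ^ n) := hg_sep.of_dvd (minpoly.dvd K _ hx)
      exact hK.tower_top F
    have hins : x ^ p ^ n ∈ perfectClosure F (AlgebraicClosure K) := by
      rw [mem_perfectClosure_iff_pow_mem p]
      refine ⟨k, ⟨⟨x ^ p ^ k, hk⟩ ^ p ^ n, ?_⟩⟩
      rw [map_pow, pow_right_comm]
      rfl
    have hbot : x ^ p ^ n ∈ (⊥ : IntermediateField F (AlgebraicClosure K)) := by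
      rw [← separableClosure_inf_perfectClosure]
      exact ⟨hsep, hins⟩
    obtain ⟨y, hy⟩ := IntermediateField.mem_bot.mp hbot
    rw [← hy]
    exact y.2
  · rintro ⟨y, hyF, hy⟩
    obtain ⟨x, rfl⟩ := IsAlgClosed.exists_pow_nat_eq y (pow_pos hp.pos n)
    exact ⟨x, ⟨n, hyF⟩, by rw [haeval, hy]⟩
end

section
/- Let K be a field admitting a Galois extension L/K whose Galois group Gal(L/K) is infinite of exponent dividing 2 (this holds, in particular, whenever K is Hilbertian), and let e be a positive integer. Then there is an uncountable subset S of Gal(K)^e such that for any two distinct e-tuples σ, σ' ∈ S the fields K̃(σ) and K̃(σ') are not elementarily equivalent as structures of the first-order language of rings with a constant symbol for each element of K. In particular, there are uncountably many elementary equivalence classes among the fields K̃(σ), σ ∈ Gal(K)^e. -/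
/-!
For `τ ∈ Gal(L/K)` choose an extension `τ̂` to the separable closure, `L` being embedded there, and
let `S` be the set of constant tuples `(τ̂, …, τ̂)`.

* `Gal(L/K)` is an infinite compact Hausdorff group, hence uncountable by the Baire category
  theorem (`not_countable_of_infinite_gal`), and distinct `τ` give distinct `τ̂`.
* An automorphism of order dividing `2` is determined by the elements it fixes
  (`eq_of_same_fixed`), so for `τ ≠ τ'` some `x ∈ L` is fixed by exactly one of `τ`, `τ'`.
* For `x ∈ L` with minimal polynomial `f` over `K`, the sentence `∃ y, f(y) = 0` holds in `K̃(τ̂)` if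
  and only if `τ x = x`. Indeed, a root of `f` in `K̃(τ̂)` lies in the normal extension `L`, and
  since the Frobenius map is injective, it is fixed by `τ`. It is of the form `g x` with
  `g ∈ Gal(L/K)`, and as the group is abelian, `τ` fixes `x` itself
  (`exists_root_iff_fixed`). Such sentences are first-order over `K` (`elemEquivOver_root_iff`).
-/

open FirstOrder Language

/-- The natural interpretation of a field extension `M` of `K` as a structure of the
language of rings with a constant symbol for each element of `K`. -/
noncomputable def fieldStruct (K M : Type*) [Field K] [Field M] [Algebra K M] :
    (Language.ring[[K]]).Structure M :=
  letI : Language.ring.Structure M := (Ring.compatibleRingOfRing M).toStructure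
  letI : (constantsOn K).Structure M := constantsOn.structure (algebraMap K M)
  Language.sumStructure _ _ M

/-- Two field extensions of `K` are elementarily equivalent as structures of the
first-order language of rings with a constant symbol for each element of `K`. -/
noncomputable def ElemEquivOver (K M N : Type*) [Field K] [Field M] [Field N]
    [Algebra K M] [Algebra K N] : Prop :=
  @Language.ElementarilyEquivalent (Language.ring[[K]]) M N (fieldStruct K M) (fieldStruct K N)

/-- The fixed field of an `e`-tuple of `K`-automorphisms of `L`, as an intermediate
field of `L / K`. -/
def fixedSubfieldOf {K L : Type*} [Field K] [Field L] [Algebra K L] {e : ℕ}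
    (σ : Fin e → (L ≃ₐ[K] L)) : IntermediateField K L where
  carrier := {x | ∀ i, σ i x = x}
  mul_mem' := fun {a b} ha hb i => by rw [map_mul, ha i, hb i]
  add_mem' := fun {a b} ha hb i => by rw [map_add, ha i, hb i]
  algebraMap_mem' := fun a i => (σ i).commutes a
  inv_mem' := fun x hx i => by rw [map_inv₀, hx i]

/-- `K̃(σ)`: the maximal purely inseparable extension (relative perfect closure) in the
algebraic closure `K̃` of the fixed field `K_s(σ)` of an `e`-tuple `σ` of elements of the
absolute Galois group `Gal(K) = Gal(K_s/K)`. -/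
noncomputable def maxPurelyInsepOfFixedField (K : Type*) [Field K] {e : ℕ}
    (σ : Fin e → (↥(separableClosure K (AlgebraicClosure K)) ≃ₐ[K]
      ↥(separableClosure K (AlgebraicClosure K)))) :
    IntermediateField K (AlgebraicClosure K) :=
  IntermediateField.restrictScalars K
    (perfectClosure
      ↥((fixedSubfieldOf σ).map (separableClosure K (AlgebraicClosure K)).val)
      (AlgebraicClosure K))

open Polynomial

/-- Every polynomial over `K` is the interpretation of a term of the language of rings with
constants from `K`, uniformly in the extension field. -/
theorem exists_term_realize_eq_aeval {K : Type*} [Field K] (p : K[X]) :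
    ∃ t : (Language.ring[[K]]).Term (Empty ⊕ Fin 1),
      ∀ (M : Type*) [Field M] [Algebra K M] (v : Empty ⊕ Fin 1 → M),
        @Term.realize _ M (fieldStruct K M) _ v t = aeval (v (Sum.inr 0)) p := by
  induction p using Polynomial.induction_on with
  | C a =>
    refine ⟨Constants.term (Sum.inr a), fun M _ _ v => ?_⟩
    rw [aeval_C]
    rfl
  | add p q hp hq =>
    obtain ⟨s, hs⟩ := hp
    obtain ⟨t, ht⟩ := hq
    refine ⟨Functions.apply₂ (Sum.inl Ring.addFunc) s t, fun M _ _ v => ?_⟩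
    rw [map_add, ← hs M v, ← ht M v]
    rfl
  | monomial n a h =>
    obtain ⟨t, ht⟩ := h
    refine ⟨Functions.apply₂ (Sum.inl Ring.mulFunc) t (Term.var (Sum.inr 0)),
      fun M _ _ v => ?_⟩
    rw [pow_succ, ← mul_assoc, map_mul, aeval_X, ← ht M v]
    rfl

theorem elemEquivOver_root_iff.{u, v} {K : Type v} {M N : Type u} [Field K] [Field M] [Field N]
    [Algebra K M] [Algebra K N] (h : ElemEquivOver K M N) (p : K[X]) :
    (∃ y : M, aeval y p = 0) ↔ ∃ y : N, aeval y p = 0 := by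
  obtain ⟨t, ht⟩ := exists_term_realize_eq_aeval p
  let θ : (Language.ring[[K]]).Sentence :=
    BoundedFormula.ex (t.bdEqual (Constants.term (Sum.inr (0 : K))))
  have key : ∀ (F : Type u) [Field F] [Algebra K F],
      @Sentence.Realize _ F (fieldStruct K F) θ ↔ ∃ y : F, aeval y p = 0 := by
    intro F _ _
    let _ := fieldStruct K F
    refine BoundedFormula.realize_ex.trans (exists_congr fun y => ?_)
    have h0 : ∀ v : Empty ⊕ Fin 1 → F,
        Term.realize v (Constants.term (Sum.inr (0 : K)) : (Language.ring[[K]]).Term _) = 0 :=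
      fun v => map_zero (algebraMap K F)
    rw [BoundedFormula.realize_bdEqual, ht F, h0]
    rfl
  rw [← key M, ← key N]
  let _ := fieldStruct K M
  let _ := fieldStruct K N
  exact elementarilyEquivalent_iff.1 h θ

theorem not_countable_of_infinite_gal (K L : Type*) [Field K] [Field L] [Algebra K L]
    [IsGalois K L] [Infinite (L ≃ₐ[K] L)] : ¬ Countable (L ≃ₐ[K] L) := by
  intro hc
  obtain ⟨g, hg⟩ := nonempty_interior_of_iUnion_of_closed
    (f := fun g : L ≃ₐ[K] L => {g}) (fun _ => isClosed_singleton) (by ext; simp)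
  have hopen : IsOpen ({g} : Set (L ≃ₐ[K] L)) := by
    rw [← interior_eq_iff_isOpen]
    exact (Set.subset_singleton_iff_eq.1 interior_subset).resolve_left hg.ne_empty
  have := discreteTopology_of_isOpen_singleton_one (by
    simpa using hopen.preimage (continuous_const_mul g) : IsOpen ({1} : Set (L ≃ₐ[K] L)))
  have := finite_of_compact_of_discrete (X := L ≃ₐ[K] L)
  exact not_finite (L ≃ₐ[K] L)

/-- An automorphism of order dividing `2` is determined by its fixed elements: `τ'` fixes both
elementary symmetric functions of `x` and `τ x`, so `τ' x` is one of `x` and `τ x`. -/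
theorem eq_of_same_fixed {K L : Type*} [Field K] [Field L] [Algebra K L] {τ τ' : L ≃ₐ[K] L}
    (h2 : τ * τ = 1) (h : ∀ x, τ x = x ↔ τ' x = x) : τ = τ' := by
  ext x
  have hττ : τ (τ x) = x := DFunLike.congr_fun h2 x
  have hs := (h (x + τ x)).1 (by rw [map_add, hττ, add_comm])
  have hm := (h (x * τ x)).1 (by rw [map_mul, hττ, mul_comm])
  rw [map_add] at hs
  rw [map_mul] at hm
  have : (τ' x - x) * (τ' x - τ x) = 0 := by linear_combination τ' x * hs - hm
  rcases mul_eq_zero.1 this with h0 | h0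
  · have h1 := sub_eq_zero.1 h0
    rw [h1, (h x).2 h1]
  · exact (sub_eq_zero.1 h0).symm

/-- An element of `K_s` lies in `K̃(σ)` if and only if it is fixed by `σ`: the Frobenius map is
injective, so passing to `p`-power roots adds nothing separable. -/
theorem mem_maxPurelyInsep_iff {K : Type*} [Field K] {e : ℕ}
    (σ : Fin e → (↥(separableClosure K (AlgebraicClosure K)) ≃ₐ[K]
      ↥(separableClosure K (AlgebraicClosure K))))
    (y : separableClosure K (AlgebraicClosure K)) :
    (y : AlgebraicClosure K) ∈ maxPurelyInsepOfFixedField K σ ↔ ∀ i, σ i y = y := by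
  have hfix : ∀ z : separableClosure K (AlgebraicClosure K),
      (z : AlgebraicClosure K) ∈
        (fixedSubfieldOf σ).map (separableClosure K (AlgebraicClosure K)).val ↔
      ∀ i, σ i z = z := by
    intro z
    constructor
    · rintro ⟨w, hw, hwz⟩
      obtain rfl : w = z := Subtype.ext hwz
      exact hw
    · exact fun hz => ⟨z, hz, rfl⟩
  unfold maxPurelyInsepOfFixedField
  rw [IntermediateField.mem_restrictScalars]
  constructor
  · intro hy i
    obtain ⟨n, w, hw⟩ := mem_perfectClosure_iff.1 hy
    set p := ringExpChar
      ↥((fixedSubfieldOf σ).map (separableClosure K (AlgebraicClosure K)).val) with hp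
    have hw' : (w : AlgebraicClosure K) = (y : AlgebraicClosure K) ^ p ^ n := hw
    have hy' := (hfix (y ^ p ^ n)).1 (by
      have := w.2
      rw [hw'] at this
      exact this) i
    rw [map_pow] at hy'
    have : ExpChar ↥((fixedSubfieldOf σ).map (separableClosure K (AlgebraicClosure K)).val) p :=
      ringExpChar.expChar _
    have : ExpChar K p := RingHom.expChar _ (FaithfulSMul.algebraMap_injective K
      ↥((fixedSubfieldOf σ).map (separableClosure K (AlgebraicClosure K)).val)) p
    have : ExpChar (separableClosure K (AlgebraicClosure K)) p :=
      expChar_of_injective_algebraMap (FaithfulSMul.algebraMap_injective K _) p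
    exact iterateFrobenius_inj _ p n hy'
  · intro hy
    exact IntermediateField.algebraMap_mem _
      (⟨(y : AlgebraicClosure K), (hfix y).2 hy⟩ :
        ↥((fixedSubfieldOf σ).map (separableClosure K (AlgebraicClosure K)).val))

/-- For an abelian extension `L/K` inside `K_s` and a nonempty tuple `σ` all of whose entries
restrict to `τ` on `L`, the minimal polynomial of `x ∈ L` has a root in `K̃(σ)` if and only if
`τ` fixes `x`. -/
theorem exists_root_iff_fixed {K L : Type*} [Field K] [Field L] [Algebra K L] [IsGalois K L]
    (hcomm : ∀ g h : L ≃ₐ[K] L, g * h = h * g) {e : ℕ} (he : 0 < e)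
    (φ : L →ₐ[K] separableClosure K (AlgebraicClosure K)) (τ : L ≃ₐ[K] L)
    (σ : Fin e → (↥(separableClosure K (AlgebraicClosure K)) ≃ₐ[K]
      ↥(separableClosure K (AlgebraicClosure K))))
    (hσ : ∀ i x, σ i (φ x) = φ (τ x)) (x : L) :
    (∃ y : maxPurelyInsepOfFixedField K σ, aeval y (minpoly K x) = 0) ↔ τ x = x := by
  constructor
  · rintro ⟨y, hy⟩
    let ψ : L →ₐ[K] AlgebraicClosure K := (separableClosure K (AlgebraicClosure K)).val.comp φ
    have hy1 : aeval (y : AlgebraicClosure K) (minpoly K x) = 0 := by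
      have := congrArg (maxPurelyInsepOfFixedField K σ).val hy
      rwa [← aeval_algHom_apply, map_zero] at this
    -- the minimal polynomial splits in `L`, so its root `y` comes from `L`
    obtain ⟨x', hx'⟩ : ∃ x', ψ x' = y := by
      have hsp := Normal.splits (inferInstance : Normal K L) x
      refine hsp.mem_range_of_isRoot (i := ψ.toRingHom)
        (map_ne_zero (minpoly.ne_zero (Algebra.IsIntegral.isIntegral x))) ?_
      rw [Polynomial.map_map, IsRoot.def, eval_map]
      rw [aeval_def, ← ψ.comp_algebraMap] at hy1
      exact hy1
    have hroot : aeval x' (minpoly K x) = 0 := by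
      have h0 : ψ (aeval x' (minpoly K x)) = 0 := by rw [← aeval_algHom_apply, hx', hy1]
      exact (map_eq_zero ψ).1 h0
    obtain ⟨g, hg⟩ := minpoly.exists_algEquiv_of_root'
      (Algebra.IsAlgebraic.isAlgebraic x) hroot
    have hfix := (mem_maxPurelyInsep_iff σ (φ x')).1 (by
      have := y.2
      rw [← hx'] at this
      exact this) ⟨0, he⟩
    rw [hσ] at hfix
    have h1 : τ x' = x' := φ.injective hfix
    rw [← hg] at h1
    have h2 : τ (g x) = g (τ x) := DFunLike.congr_fun (hcomm τ g) x
    exact g.injective (h2.symm.trans h1)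
  · intro hx
    refine ⟨⟨(φ x : AlgebraicClosure K), (mem_maxPurelyInsep_iff σ (φ x)).2
      fun i => by rw [hσ, hx]⟩, ?_⟩
    apply Subtype.ext
    change (maxPurelyInsepOfFixedField K σ).val _ = 0
    rw [← aeval_algHom_apply]
    change aeval (((separableClosure K (AlgebraicClosure K)).val.comp φ) x) _ = 0
    rw [aeval_algHom_apply, minpoly.aeval, map_zero]

/-- **Theorem (Statement 9).** Let `K` be a field admitting a Galois extension `L/K`
whose Galois group is infinite of exponent dividing `2` (as holds whenever `K` is
Hilbertian), and let `e` be a positive integer.  Then there is an uncountable set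
`S ⊆ Gal(K)^e` such that for distinct `σ, σ′ ∈ S` the fields `K̃(σ)` and `K̃(σ′)` are not
elementarily equivalent in the language of rings with a constant for each element of
`K`. -/
theorem uncountably_many_elementary_classes_of_maximal_purely_insep_fixed_fields
    (K : Type*) [Field K] (e : ℕ) (he : 0 < e)
    (L : Type*) [Field L] [Algebra K L] [IsGalois K L]
    [Infinite (L ≃ₐ[K] L)] (hexp : ∀ τ : L ≃ₐ[K] L, τ * τ = 1) :
    ∃ S : Set (Fin e → (↥(separableClosure K (AlgebraicClosure K)) ≃ₐ[K]
        ↥(separableClosure K (AlgebraicClosure K)))),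
      ¬S.Countable ∧
      ∀ σ ∈ S, ∀ σ2 ∈ S, σ ≠ σ2 →
        ¬ElemEquivOver K ↥(maxPurelyInsepOfFixedField K σ)
          ↥(maxPurelyInsepOfFixedField K σ2) := by
  have hcomm : ∀ g h : L ≃ₐ[K] L, g * h = h * g := fun g h => by
    have hinv : ∀ a : L ≃ₐ[K] L, a⁻¹ = a := fun a => inv_eq_of_mul_eq_one_left (hexp a)
    rw [← hinv (g * h), mul_inv_rev, hinv, hinv]
  let φ : L →ₐ[K] separableClosure K (AlgebraicClosure K) := IsSepClosed.lift
  obtain ⟨s, hs⟩ : ∃ s : (L ≃ₐ[K] L) → (↥(separableClosure K (AlgebraicClosure K)) ≃ₐ[K]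
      ↥(separableClosure K (AlgebraicClosure K))), ∀ τ x, s τ (φ x) = φ (τ x) := by
    let _ : Algebra L (separableClosure K (AlgebraicClosure K)) := φ.toRingHom.toAlgebra
    have : IsScalarTower K L (separableClosure K (AlgebraicClosure K)) :=
      IsScalarTower.of_algebraMap_eq fun a => (φ.commutes a).symm
    exact ⟨fun τ => τ.liftNormal _, fun τ x => τ.liftNormal_commutes _ x⟩
  refine ⟨Set.range fun τ _ => s τ, ?_, ?_⟩
  · intro hS
    have hinj : Function.Injective fun (τ : L ≃ₐ[K] L) (_ : Fin e) => s τ := by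
      intro τ τ' h
      have h0 : s τ = s τ' := congrFun h ⟨0, he⟩
      ext x
      have h1 := hs τ x
      rw [h0, hs τ' x] at h1
      exact (φ.injective h1).symm
    have := hS.to_subtype
    exact not_countable_of_infinite_gal K L (Set.rangeFactorization_injective.2 hinj).countable
  · rintro _ ⟨τ, rfl⟩ _ ⟨τ', rfl⟩ hne heq
    refine hne ?_
    rw [eq_of_same_fixed (hexp τ) fun x => ?_]
    rw [← exists_root_iff_fixed hcomm he φ τ (fun _ => s τ) (fun _ => hs τ) x,
      ← exists_root_iff_fixed hcomm he φ τ' (fun _ => s τ') (fun _ => hs τ') x]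
    exact elemEquivOver_root_iff heq _
end

section
/- For each positive integer e there is an uncountable subset S of Gal(ℚ)^e such that for any two distinct e-tuples σ, σ' ∈ S the fixed fields Q̃(σ) and Q̃(σ') are not elementarily equivalent as structures of the first-order language of rings with a constant symbol for each element of ℚ. In particular, there are uncountably many elementary equivalence classes among the fields Q̃(σ), σ ∈ Gal(ℚ)^e. -/
/-!
For a prime `p` and `σ ∈ Gal(ℚ)`, whether `p` is a square in the fixed field of `σ` is expressed by
the sentence `∃ x, x * x = p`, and it holds iff `σ` fixes a square root of `p`. So it suffices that
every prescribed pattern of signs `σ(√p) = ±√p`, over all primes `p`, is realized by some `σ`: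
the constant tuples `(σ, …, σ)`, one for each of the uncountably many patterns, then form `S`.

Realizing a pattern: the signs define a homomorphism from `Gal(ℚ)` to `𝔽₂^s` for each finite set `s`
of primes. Were it not surjective, a nonzero functional would vanish on its image, so that every `σ`
would fix `∏ √p` over some nonempty set of primes. That product would be rational, contradicting that
a nonempty product of distinct primes is not a rational square
(`exists_kummerSign_finite`). Compactness of `Gal(ℚ)` passes to all primes at once
(`exists_kummerSign`).
-/

open FirstOrder Language

/-- The sentence `∃ x, x * x = q` of the language of rings with constants from `K`. -/
noncomputable def isSquareSentence {K : Type} (q : K) : (Language.ring[[K]]).Sentence :=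
  BoundedFormula.ex (Term.bdEqual
    (Functions.apply₂ (Sum.inl Ring.mulFunc : (Language.ring[[K]]).Functions 2)
      (Term.var (Sum.inr 0)) (Term.var (Sum.inr 0)))
    (Constants.term (Sum.inr q : (Language.ring[[K]]).Constants)))

theorem realize_isSquareSentence {K M : Type} [Field K] [Field M] [Algebra K M] (q : K) :
    @Sentence.Realize (Language.ring[[K]]) M (fieldStruct K M) (isSquareSentence q) ↔
      ∃ x : M, x * x = algebraMap K M q := by
  let _ := fieldStruct K M
  change Sentence.Realize M _ ↔ _
  unfold isSquareSentence Sentence.Realize Formula.Realize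
  rw [BoundedFormula.realize_ex]
  refine exists_congr fun x => ?_
  rw [BoundedFormula.realize_bdEqual]
  erw [Term.realize_functions_apply₂, Term.realize_constants]
  exact Iff.rfl

local notation "Qbar" => AlgebraicClosure ℚ

/-- Stated for the canonical `ℚ`-algebra structure of a field of characteristic zero, which is only
propositionally equal to the one carried by `AlgebraicClosure ℚ` by construction. -/
instance isAlgClosure_Qbar : IsAlgClosure ℚ Qbar := by
  have h := AlgebraicClosure.isAlgebraic ℚ
  rw [Subsingleton.elim (AlgebraicClosure.instAlgebra ℚ) DivisionRing.toRatAlgebra] at h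
  exact ⟨inferInstance, h⟩

/-- A chosen square root of the prime `p` in the algebraic closure of `ℚ`. -/
noncomputable def rootPrime (p : Nat.Primes) : Qbar :=
  (IsAlgClosed.exists_pow_nat_eq ((p : ℕ) : Qbar) (n := 2) two_pos).choose

theorem rootPrime_sq (p : Nat.Primes) : rootPrime p ^ 2 = ((p : ℕ) : Qbar) :=
  (IsAlgClosed.exists_pow_nat_eq ((p : ℕ) : Qbar) (n := 2) two_pos).choose_spec

theorem rootPrime_ne_zero (p : Nat.Primes) : rootPrime p ≠ 0 := by
  intro h
  have := rootPrime_sq p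
  rw [h, zero_pow two_ne_zero] at this
  exact p.2.ne_zero (by exact_mod_cast this.symm)

theorem rootPrime_ne_neg (p : Nat.Primes) : -rootPrime p ≠ rootPrime p :=
  fun h => rootPrime_ne_zero p (neg_eq_self.mp h)

theorem map_rootPrime (σ : Qbar ≃ₐ[ℚ] Qbar) (p : Nat.Primes) :
    σ (rootPrime p) = rootPrime p ∨ σ (rootPrime p) = -rootPrime p := by
  rw [← sq_eq_sq_iff_eq_or_eq_neg, ← map_pow, rootPrime_sq, map_natCast]

open Classical in
/-- The action of `σ` on the chosen square root of `p`, written additively: `0` if the root is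
fixed and `1` if it is negated. -/
noncomputable def kummerSign (σ : Qbar ≃ₐ[ℚ] Qbar) (p : Nat.Primes) : ZMod 2 :=
  if σ (rootPrime p) = rootPrime p then 0 else 1

theorem kummerSign_eq_zero {σ : Qbar ≃ₐ[ℚ] Qbar} {p : Nat.Primes} :
    kummerSign σ p = 0 ↔ σ (rootPrime p) = rootPrime p := by
  simp [kummerSign]

theorem kummerSign_mul (σ τ : Qbar ≃ₐ[ℚ] Qbar) (p : Nat.Primes) :
    kummerSign (σ * τ) p = kummerSign σ p + kummerSign τ p := by
  have h2 : (1 : ZMod 2) + 1 = 0 := by decide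
  rcases map_rootPrime σ p with h | h <;> rcases map_rootPrime τ p with h' | h' <;>
    simp [kummerSign, AlgEquiv.mul_apply, h, h', rootPrime_ne_neg, h2]

theorem map_rootPrime_eq (σ : Qbar ≃ₐ[ℚ] Qbar) (p : Nat.Primes) :
    σ (rootPrime p) = ((-1) ^ (kummerSign σ p).val) * rootPrime p := by
  rcases map_rootPrime σ p with h | h <;>
    simp [kummerSign, h, rootPrime_ne_neg, ZMod.val_one]

/-- A nonempty product of distinct primes is not a rational square. -/
theorem not_sq_prod_primes (S : Finset Nat.Primes) (hS : S.Nonempty) (q : ℚ) :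
    q ^ 2 ≠ ((∏ p ∈ S, (p : ℕ) : ℕ) : ℚ) := by
  intro h
  obtain ⟨p, hp⟩ := hS
  have hsf : Squarefree (∏ p ∈ S, (p : ℕ)) := by
    refine Finset.squarefree_prod_of_pairwise_isCoprime ?_ fun p _ => p.2.prime.squarefree
    intro a _ b _ hab
    exact Nat.coprime_iff_isRelPrime.mp
      ((Nat.coprime_primes a.2 b.2).2 fun h => hab (Subtype.ext h))
  have hsq : IsSquare (((∏ p ∈ S, (p : ℕ) : ℕ) : ℚ)) := ⟨q, by rw [← h, sq]⟩
  rw [Rat.isSquare_natCast_iff] at hsq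
  obtain ⟨m, hm⟩ := hsq
  have hu := Nat.isUnit_iff.mp (hsf m ⟨1, by rw [hm, mul_one]⟩)
  have hd : (p : ℕ) ∣ ∏ p ∈ S, (p : ℕ) := Finset.dvd_prod_of_mem (fun p : Nat.Primes => (p : ℕ)) hp
  rw [hm, hu] at hd
  exact p.2.one_lt.ne' (Nat.dvd_one.mp hd)

/-- For a nonempty finite set of primes, some automorphism negates the product of their roots, since
that product is irrational. -/
theorem exists_sum_kummerSign_ne_zero (S : Finset Nat.Primes) (hS : S.Nonempty) :
    ∃ σ : Qbar ≃ₐ[ℚ] Qbar, ∑ p ∈ S, kummerSign σ p ≠ 0 := by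
  by_contra! hcon
  have hfix : ∀ σ : Qbar ≃ₐ[ℚ] Qbar, σ (∏ p ∈ S, rootPrime p) = ∏ p ∈ S, rootPrime p := by
    intro σ
    have heven : Even (∑ p ∈ S, (kummerSign σ p).val) := by
      rw [← ZMod.natCast_eq_zero_iff_even]
      simpa using hcon σ
    rw [map_prod, Finset.prod_congr rfl fun p _ => map_rootPrime_eq σ p,
      Finset.prod_mul_distrib, Finset.prod_pow_eq_pow_sum, heven.neg_one_pow, one_mul]
  obtain ⟨q, hq⟩ := IntermediateField.mem_bot.mp
    ((InfiniteGalois.mem_bot_iff_fixed (k := ℚ) (∏ p ∈ S, rootPrime p)).mpr hfix)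
  refine not_sq_prod_primes S hS q ((algebraMap ℚ Qbar).injective ?_)
  rw [map_pow, hq, ← Finset.prod_pow, Finset.prod_congr rfl fun p _ => rootPrime_sq p]
  simp

/-- Any sign pattern on a finite set of primes is realized. The realized patterns form an
`𝔽₂`-subspace, and a proper subspace would be killed by a nonzero functional, i.e. by summation
over a nonempty set of primes. -/
theorem exists_kummerSign_finite (s : Finset Nat.Primes) (ε : Nat.Primes → ZMod 2) :
    ∃ σ : Qbar ≃ₐ[ℚ] Qbar, ∀ p ∈ s, kummerSign σ p = ε p := by
  classical
  let f : Additive (Qbar ≃ₐ[ℚ] Qbar) →+ (s → ZMod 2) :=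
    AddMonoidHom.mk' (fun σ p => kummerSign σ.toMul p) fun a b => by
      ext p
      exact kummerSign_mul a.toMul b.toMul p
  let V : Submodule (ZMod 2) (s → ZMod 2) := AddSubgroup.toZModSubmodule 2 f.range
  have hV : V = ⊤ := by
    by_contra hne
    obtain ⟨φ, hφ, hle⟩ := V.exists_le_ker_of_lt_top (lt_top_iff_ne_top.mpr hne)
    have h01 : ∀ a : ZMod 2, a = 0 ∨ a = 1 := by decide
    have hexp : ∀ v, φ v = ∑ i, v i * φ (Pi.single i 1) := fun v => by
      conv_lhs => rw [LinearMap.pi_apply_eq_sum_univ φ v]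
      refine Finset.sum_congr rfl fun i _ => ?_
      rw [smul_eq_mul]
      congr 2
      ext j
      simp [Pi.single_apply, eq_comm]
    let T : Finset s := Finset.univ.filter fun i => φ (Pi.single i 1) = 1
    have hT : T.Nonempty := by
      rw [Finset.nonempty_iff_ne_empty]
      intro hT
      refine hφ (LinearMap.ext fun v => ?_)
      rw [hexp, LinearMap.zero_apply]
      refine Finset.sum_eq_zero fun i _ => ?_
      rcases h01 (φ (Pi.single i 1)) with h | h
      · rw [h, mul_zero]
      · have hi : i ∈ T := Finset.mem_filter.mpr ⟨Finset.mem_univ i, h⟩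
        rw [hT] at hi
        exact absurd hi (Finset.notMem_empty i)
    obtain ⟨σ, hσ⟩ := exists_sum_kummerSign_ne_zero
      (T.map (Function.Embedding.subtype _)) (hT.map)
    apply hσ
    have hmem : f (Additive.ofMul σ) ∈ V := ⟨_, rfl⟩
    have hz : φ (f (Additive.ofMul σ)) = 0 := hle hmem
    rw [hexp] at hz
    rw [Finset.sum_map, ← hz, Finset.sum_filter]
    refine Finset.sum_congr rfl fun i _ => ?_
    rcases h01 (φ (Pi.single i 1)) with h | h
    · simp [h]
    · rw [if_pos h, h, mul_one]
      rfl
  have hmem : (fun p : s => ε p) ∈ V := hV ▸ Submodule.mem_top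
  obtain ⟨σ, hσ⟩ := hmem
  exact ⟨σ.toMul, fun p hp => congrFun hσ ⟨p, hp⟩⟩

/-- Any sign pattern on all primes is realized, by compactness of the absolute Galois group. -/
theorem exists_kummerSign (ε : Nat.Primes → ZMod 2) :
    ∃ σ : Qbar ≃ₐ[ℚ] Qbar, ∀ p, kummerSign σ p = ε p := by
  have hclosed : ∀ p, IsClosed {σ : Qbar ≃ₐ[ℚ] Qbar | kummerSign σ p = ε p} := by
    intro p
    have hopen : IsOpen {σ : Qbar ≃ₐ[ℚ] Qbar | kummerSign σ p ≠ ε p} := by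
      rw [isOpen_iff_mem_nhds]
      intro σ hσ
      -- the sign at `p` is constant on cosets of the open stabilizer of the root
      have hst : (MulAction.stabilizer (Qbar ≃ₐ[ℚ] Qbar) (rootPrime p) : Set _) ∈
          nhds (1 : Qbar ≃ₐ[ℚ] Qbar) :=
        (stabilizer_isOpen_of_isIntegral (K := ℚ) (rootPrime p)).mem_nhds (one_mem _)
      have hc : ContinuousAt (fun τ : Qbar ≃ₐ[ℚ] Qbar => σ⁻¹ * τ) σ := by fun_prop
      filter_upwards [hc.preimage_mem_nhds (by simpa using hst)] with τ hτ
      have h0 : kummerSign (σ⁻¹ * τ) p = 0 := kummerSign_eq_zero.mpr hτ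
      have h1 := kummerSign_mul σ (σ⁻¹ * τ) p
      rw [mul_inv_cancel_left, h0, add_zero] at h1
      exact fun h => hσ (h1 ▸ h)
    exact ⟨hopen⟩
  obtain ⟨σ, hσ⟩ := CompactSpace.iInter_nonempty hclosed fun s => by
    obtain ⟨σ, hσ⟩ := exists_kummerSign_finite s ε
    exact ⟨σ, by simpa using hσ⟩
  exact ⟨σ, by simpa using hσ⟩

theorem isSquareSentence_fixedSubfield {e : ℕ} (he : 0 < e) (σ : Qbar ≃ₐ[ℚ] Qbar)
    (p : Nat.Primes) :
    @Sentence.Realize (Language.ring[[ℚ]])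
        ↥(fixedSubfieldOf (fun _ : Fin e => σ)) (fieldStruct _ _)
        (isSquareSentence ((p : ℕ) : ℚ)) ↔ kummerSign σ p = 0 := by
  rw [realize_isSquareSentence, kummerSign_eq_zero]
  constructor
  · rintro ⟨x, hx⟩
    have hfix : σ (x : Qbar) = x := x.2 ⟨0, he⟩
    have hx2 : (x : Qbar) ^ 2 = rootPrime p ^ 2 := by
      rw [rootPrime_sq, sq]
      simpa using congrArg (fun y : ↥(fixedSubfieldOf (fun _ : Fin e => σ)) => (y : Qbar)) hx
    rcases sq_eq_sq_iff_eq_or_eq_neg.mp hx2 with h | h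
    · rw [← h, hfix]
    · rw [← neg_eq_iff_eq_neg] at h
      rw [← h, map_neg, hfix]
  · intro h
    refine ⟨⟨rootPrime p, fun _ => h⟩, Subtype.ext ?_⟩
    have := rootPrime_sq p
    rw [sq] at this
    simpa using this

/-- **Theorem (Statement 11).** For each positive integer `e` there is an uncountable set
`S ⊆ Gal(ℚ)^e` such that for any two distinct `e`-tuples `σ, σ′ ∈ S` the fixed fields
`Q̃(σ)` and `Q̃(σ′)` are not elementarily equivalent in the language of rings with a
constant for each element of `ℚ`. -/
theorem uncountably_many_elementary_classes_of_fixed_fields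
    (e : ℕ) (he : 0 < e) :
    ∃ S : Set (Fin e → (AlgebraicClosure ℚ ≃ₐ[ℚ] AlgebraicClosure ℚ)),
      ¬S.Countable ∧
      ∀ σ ∈ S, ∀ σ2 ∈ S, σ ≠ σ2 →
        ¬ElemEquivOver ℚ ↥(fixedSubfieldOf σ) ↥(fixedSubfieldOf σ2) := by
  choose g hg using exists_kummerSign
  refine ⟨Set.range fun (ε : Nat.Primes → ZMod 2) (_ : Fin e) => g ε, ?_, ?_⟩
  · intro hc
    have hinj : Function.Injective fun (ε : Nat.Primes → ZMod 2) (_ : Fin e) => g ε := by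
      intro a b hab
      have : g a = g b := congrFun hab ⟨0, he⟩
      ext1 p
      rw [← hg a p, ← hg b p, this]
    have hcount : Countable (Nat.Primes → ZMod 2) := by
      have := hc.to_subtype
      exact (Set.rangeFactorization_injective.mpr hinj).countable
    have hle := Cardinal.mk_le_aleph0_iff.mpr hcount
    refine absurd hle (not_le.mpr ?_)
    rw [← Cardinal.power_def, Cardinal.mk_fintype (ZMod 2), ZMod.card]
    exact (Cardinal.aleph0_le_mk _).trans_lt (by exact_mod_cast Cardinal.cantor _)
  · rintro _ ⟨a, rfl⟩ _ ⟨b, rfl⟩ hne heq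
    apply hne
    suffices a = b by rw [this]
    ext1 p
    have key : kummerSign (g a) p = 0 ↔ kummerSign (g b) p = 0 := by
      rw [← isSquareSentence_fixedSubfield he, ← isSquareSentence_fixedSubfield he]
      exact @ElementarilyEquivalent.realize_sentence _ _ _ (fieldStruct _ _) (fieldStruct _ _)
        heq _
    rw [hg, hg] at key
    generalize a p = x at *
    generalize b p = y at *
    revert x y
    decide
end

section
/- For each positive integer e, equip Gal(ℚ)^{2e} with its Haar probability measure μ. Then the set of pairs (σ, σ') ∈ Gal(ℚ)^{2e} such that the fixed fields Q̃(σ) and Q̃(σ') are NOT elementarily equivalent as structures of the first-order language of rings with a constant symbol for each element of ℚ has μ-measure 1. -/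
/-!
Elementarily equivalent fixed fields satisfy the same sentences `∃ x, x * x = p`, so they contain
the same square roots of primes. It therefore suffices that almost no pair `(σ, σ')` has fixed
fields that agree on the square roots of all primes.

Let `A n` (`agreeSet`) be the clopen set of pairs that agree on the square roots of the first `n`
primes. The square roots of distinct primes are independent, so some automorphism `τ` fixes the
first `n` of them and moves the next one (`exists_algEquiv_fix_move`). Left multiplication of any
selection of the components of `σ` by `τ` preserves `A n`, and for every pair in `A n` one of these
`2 ^ e` translations produces a disagreement at the next prime (`agreeSet_subset_iUnion`). By
invariance of the Haar measure, `μ (A n) ≤ 2 ^ e * μ (A n \ A (n + 1))`, that is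
`μ (A (n + 1)) ≤ (1 - 2 ^ (-e)) * μ (A n)`. Hence `μ (A n)` decays geometrically and the
intersection of the `A n` is null (`measure_iInter_agreeSet`).
-/


open FirstOrder Language

open MeasureTheory

/-! ### Square roots and elementary equivalence -/

open FirstOrder Language in
/-- The sentence `∃ x, x * x = a` of the language of rings with constants from `K`. -/
def sqrtSentence {K : Type*} (a : K) : (Language.ring[[K]]).Sentence :=
  (((Functions.apply₂ (Sum.inl Ring.mulFunc : (Language.ring[[K]]).Functions 2)
    (&0) (&0)) =' (Constants.term ((Language.ring).con a)) :
      (Language.ring[[K]]).BoundedFormula Empty 1)).ex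

open FirstOrder Language in
theorem realize_sqrtSentence {K M : Type*} [Field K] [Field M] [Algebra K M] (a : K) :
    @Sentence.Realize (Language.ring[[K]]) M (fieldStruct K M) (sqrtSentence a) ↔
      ∃ x : M, x * x = algebraMap K M a := by
  let := fieldStruct K M
  unfold sqrtSentence Sentence.Realize Formula.Realize
  rw [BoundedFormula.realize_ex]
  refine exists_congr fun x => ?_
  rw [BoundedFormula.realize_bdEqual]
  exact Iff.of_eq (congrArg₂ Eq Term.realize_functions_apply₂ Term.realize_constants)

theorem ElemEquivOver.exists_sqrt_iff {K M N : Type*} [Field K] [Field M] [Field N]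
    [Algebra K M] [Algebra K N] (h : ElemEquivOver K M N) (a : K) :
    (∃ x : M, x * x = algebraMap K M a) ↔ ∃ x : N, x * x = algebraMap K N a := by
  rw [← realize_sqrtSentence, ← realize_sqrtSentence]
  let := fieldStruct K M
  let := fieldStruct K N
  exact FirstOrder.Language.ElementarilyEquivalent.realize_sentence h _

section Core

variable {L : Type*} [Field L] [Algebra ℚ L]

/-! ### Independence of the square roots of primes -/

theorem prod_prime_not_isSquare (T : Finset ℕ) (hT : T.Nonempty) :
    ¬ IsSquare ((∏ k ∈ T, Nat.nth Nat.Prime k : ℕ) : ℚ) := by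
  rw [Rat.isSquare_natCast_iff]
  rintro ⟨m, hm⟩
  have hsq : Squarefree (∏ k ∈ T, Nat.nth Nat.Prime k) := by
    refine Finset.squarefree_prod_of_pairwise_isCoprime ?_ ?_
    · intro i _ j _ hij
      rw [Function.onFun, ← Nat.coprime_iff_isRelPrime,
        Nat.coprime_primes (Nat.prime_nth_prime i) (Nat.prime_nth_prime j)]
      exact fun h => hij (Nat.nth_injective Nat.infinite_setOfPred_prime h)
    · exact fun i _ => (Nat.prime_nth_prime i).prime.squarefree
  have hm1 : m = 1 := Nat.isUnit_iff.1 (hsq m ⟨1, by rw [hm, mul_one]⟩)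
  obtain ⟨k, hk⟩ := hT
  have := Finset.dvd_prod_of_mem (fun k => Nat.nth Nat.Prime k) hk
  rw [hm, hm1] at this
  exact (Nat.prime_nth_prime k).one_lt.ne' (Nat.dvd_one.1 this)

theorem map_eq_or_eq_neg (τ : L ≃ₐ[ℚ] L) {x : L} {a : ℚ} (h : x * x = algebraMap ℚ L a) :
    τ x = x ∨ τ x = -x := by
  have : τ x * τ x = x * x := by rw [← map_mul, h, τ.commutes]
  exact mul_self_eq_mul_self_iff.1 this

/-- Independence of the square roots of distinct primes, in Galois form.  Stating it for
products over `T` makes the induction on `S` purely group theoretic: when `q` is added to `S`,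
automorphisms moving `√T` and `√(T ∪ {q})`, or their product, do the job. -/
theorem exists_algEquiv_fix_move [IsGalois ℚ L] (r : ℕ → L)
    (hr : ∀ k, r k * r k = algebraMap ℚ L (Nat.nth Nat.Prime k : ℚ)) (S : Finset ℕ) :
    ∀ T : Finset ℕ, T.Nonempty → Disjoint S T →
      ∃ τ : L ≃ₐ[ℚ] L, (∀ k ∈ S, τ (r k) = r k) ∧ τ (∏ k ∈ T, r k) ≠ ∏ k ∈ T, r k := by
  have hprod : ∀ T : Finset ℕ, (∏ k ∈ T, r k) * (∏ k ∈ T, r k) =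
      algebraMap ℚ L ((∏ k ∈ T, Nat.nth Nat.Prime k : ℕ) : ℚ) := by
    intro T
    rw [← Finset.prod_mul_distrib, Nat.cast_prod, map_prod]
    exact Finset.prod_congr rfl fun k _ => hr k
  have hr0 : ∀ k, r k ≠ 0 := by
    intro k hk
    have h := hr k
    rw [hk, mul_zero, eq_comm, map_eq_zero, Nat.cast_eq_zero] at h
    exact (Nat.prime_nth_prime k).ne_zero h
  have hdiff : ∀ x : L, x ≠ 0 → -x ≠ x := by
    have : CharZero L := algebraRat.charZero L
    exact fun x hx h => hx (self_eq_neg.1 h.symm)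
  induction S using Finset.induction_on with
  | empty =>
    intro T hT _
    by_contra! hcon
    have hfix : ∀ τ : L ≃ₐ[ℚ] L, τ (∏ k ∈ T, r k) = ∏ k ∈ T, r k :=
      fun τ => hcon τ (by simp)
    rw [← InfiniteGalois.mem_bot_iff_fixed, IntermediateField.mem_bot] at hfix
    obtain ⟨y, hy⟩ := hfix
    refine prod_prime_not_isSquare T hT ⟨y, (algebraMap ℚ L).injective ?_⟩
    rw [← hprod T, ← hy, map_mul]
  | insert q S hq ih =>
    intro T hT hdisj
    rw [Finset.disjoint_insert_left] at hdisj
    obtain ⟨hqT, hdisj⟩ := hdisj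
    obtain ⟨τ, hτS, hτT⟩ := ih T hT hdisj
    by_cases hτq : τ (r q) = r q
    · exact ⟨τ, by simpa [hτq] using hτS, hτT⟩
    obtain ⟨ρ, hρS, hρT⟩ := ih (insert q T) (Finset.insert_nonempty _ _)
      (Finset.disjoint_insert_right.2 ⟨hq, hdisj⟩)
    rw [Finset.prod_insert hqT, map_mul] at hρT
    have hT0 : ∏ k ∈ T, r k ≠ 0 := Finset.prod_ne_zero_iff.2 fun k _ => hr0 k
    have hτq' := (map_eq_or_eq_neg τ (hr q)).resolve_left hτq
    have hτT' := (map_eq_or_eq_neg τ (hprod T)).resolve_left hτT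
    rcases map_eq_or_eq_neg ρ (hr q) with h1 | h1
    · refine ⟨ρ, by simpa [h1] using hρS, fun h2 => hρT (by rw [h1, h2])⟩
    · have h2 : ρ (∏ k ∈ T, r k) = ∏ k ∈ T, r k := by
        refine (map_eq_or_eq_neg ρ (hprod T)).resolve_right fun h2 => hρT ?_
        rw [h1, h2, neg_mul_neg]
      refine ⟨ρ * τ, ?_, ?_⟩
      · intro k hk
        rcases Finset.mem_insert.1 hk with rfl | hk
        · rw [AlgEquiv.mul_apply, hτq', map_neg, h1, neg_neg]
        · rw [AlgEquiv.mul_apply, hτS k hk, hρS k hk]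
      · rw [AlgEquiv.mul_apply, hτT', map_neg, h2]
        exact hdiff _ hT0

/-! ### The sets of agreeing pairs and their measure -/

/-- The pairs of tuples whose fixed fields contain the same ones among `r 0, …, r (n - 1)`. -/
def agreeSet (e : ℕ) (r : ℕ → L) (n : ℕ) :
    Set ((Fin e → (L ≃ₐ[ℚ] L)) × (Fin e → (L ≃ₐ[ℚ] L))) :=
  {p | ∀ k < n, (∀ i, p.1 i (r k) = r k) ↔ ∀ i, p.2 i (r k) = r k}

theorem isClopen_fix [Algebra.IsAlgebraic ℚ L] (x : L) :
    IsClopen {σ : L ≃ₐ[ℚ] L | σ x = x} := by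
  have : {σ : L ≃ₐ[ℚ] L | σ x = x} =
      ((IntermediateField.adjoin ℚ {x}).fixingSubgroup : Set (L ≃ₐ[ℚ] L)) := by
    ext σ
    have := IntermediateField.forall_mem_adjoin_smul_eq_self_iff ℚ (S := {x}) σ
    simp only [Set.mem_singleton_iff, forall_eq] at this
    rw [SetLike.mem_coe, IntermediateField.mem_fixingSubgroup_iff]
    exact this.symm
  rw [this]
  have := IntermediateField.adjoin.finiteDimensional (K := ℚ)
    (Algebra.IsIntegral.isIntegral (R := ℚ) x)
  exact ⟨IntermediateField.fixingSubgroup_isClosed _, IntermediateField.fixingSubgroup_isOpen _⟩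

theorem measurableSet_agreeSet [Algebra.IsAlgebraic ℚ L] (e : ℕ) (r : ℕ → L) (n : ℕ)
    [MeasurableSpace ((Fin e → (L ≃ₐ[ℚ] L)) × (Fin e → (L ≃ₐ[ℚ] L)))]
    [BorelSpace ((Fin e → (L ≃ₐ[ℚ] L)) × (Fin e → (L ≃ₐ[ℚ] L)))] :
    MeasurableSet (agreeSet e r n) := by
  have h1 : ∀ k, MeasurableSet
      {p : (Fin e → (L ≃ₐ[ℚ] L)) × (Fin e → (L ≃ₐ[ℚ] L)) | ∀ i, p.1 i (r k) = r k} := by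
    intro k
    rw [Set.ofPred_forall]
    refine MeasurableSet.iInter fun i => IsOpen.measurableSet ?_
    have hc : Continuous fun p : (Fin e → (L ≃ₐ[ℚ] L)) × (Fin e → (L ≃ₐ[ℚ] L)) => p.1 i :=
      (continuous_apply i).comp continuous_fst
    exact (isClopen_fix (r k)).isOpen.preimage hc
  have h2 : ∀ k, MeasurableSet
      {p : (Fin e → (L ≃ₐ[ℚ] L)) × (Fin e → (L ≃ₐ[ℚ] L)) | ∀ i, p.2 i (r k) = r k} := by
    intro k
    rw [Set.ofPred_forall]
    refine MeasurableSet.iInter fun i => IsOpen.measurableSet ?_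
    have hc : Continuous fun p : (Fin e → (L ≃ₐ[ℚ] L)) × (Fin e → (L ≃ₐ[ℚ] L)) => p.2 i :=
      (continuous_apply i).comp continuous_snd
    exact (isClopen_fix (r k)).isOpen.preimage hc
  unfold agreeSet
  simp only [Set.ofPred_forall]
  refine MeasurableSet.iInter fun k => MeasurableSet.iInter fun _ => ?_
  exact (h1 k).iff (h2 k)

/-- Multiplying suitable components of `p.1` by an automorphism that moves `r n` but fixes all
earlier `r k` turns agreement at `r n` into disagreement. -/
theorem agreeSet_subset_iUnion {e : ℕ} (he : 0 < e) (r : ℕ → L) (a : ℕ → ℚ)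
    (hr : ∀ k, r k * r k = algebraMap ℚ L (a k)) (n : ℕ) (τ : L ≃ₐ[ℚ] L)
    (hτ : ∀ k < n, τ (r k) = r k) (hτn : τ (r n) ≠ r n) :
    agreeSet e r n ⊆ ⋃ ε : Fin e → Bool,
      (fun p => ((fun i => if ε i then τ else 1, 1) :
        (Fin e → (L ≃ₐ[ℚ] L)) × (Fin e → (L ≃ₐ[ℚ] L))) * p) ⁻¹'
        (agreeSet e r n \ agreeSet e r (n + 1)) := by
  intro p hp
  have hτn' := (map_eq_or_eq_neg τ (hr n)).resolve_left hτn
  -- Translation by `τ` in any set of components does not change which earlier `r k` are fixed.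
  have hmem : ∀ ε : Fin e → Bool, (((fun i => if ε i then τ else 1, 1) :
        (Fin e → (L ≃ₐ[ℚ] L)) × (Fin e → (L ≃ₐ[ℚ] L))) * p) ∈ agreeSet e r n := by
    intro ε k hk
    have h1 : ∀ i, (if ε i then τ else 1 : L ≃ₐ[ℚ] L) (p.1 i (r k)) = r k ↔
        p.1 i (r k) = r k := by
      intro i
      split_ifs
      · conv_lhs => rhs; rw [← hτ k hk]
        exact τ.injective.eq_iff
      · rfl
    exact (forall_congr' h1).trans (hp k hk)
  suffices h : ∃ ε : Fin e → Bool, ¬ ((∀ i, (if ε i then τ else 1 : L ≃ₐ[ℚ] L) (p.1 i (r n)) = r n)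
      ↔ ∀ i, p.2 i (r n) = r n) by
    obtain ⟨ε, hε⟩ := h
    refine Set.mem_iUnion.2 ⟨ε, hmem ε, fun h => hε ?_⟩
    exact h n n.lt_succ_self
  classical
  by_cases h2 : ∀ i, p.2 i (r n) = r n
  · by_cases h1 : ∀ i, p.1 i (r n) = r n
    · refine ⟨fun _ => true, fun h => hτn ?_⟩
      have := h.2 h2 ⟨0, he⟩
      rwa [h1, if_pos rfl] at this
    · exact ⟨fun _ => false, fun h => h1 (by simpa using h.2 h2)⟩
  · refine ⟨fun i => decide (p.1 i (r n) ≠ r n), fun h => h2 (h.1 fun i => ?_)⟩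
    by_cases hi : p.1 i (r n) = r n
    · simp [hi]
    · have hi' := (map_eq_or_eq_neg (p.1 i) (hr n)).resolve_left hi
      rw [if_pos (by simpa using hi), hi', map_neg, hτn', neg_neg]

theorem measure_iInter_agreeSet [IsGalois ℚ L] {e : ℕ} (he : 0 < e) (r : ℕ → L)
    (hr : ∀ k, r k * r k = algebraMap ℚ L (Nat.nth Nat.Prime k : ℚ))
    [MeasurableSpace ((Fin e → (L ≃ₐ[ℚ] L)) × (Fin e → (L ≃ₐ[ℚ] L)))]
    [BorelSpace ((Fin e → (L ≃ₐ[ℚ] L)) × (Fin e → (L ≃ₐ[ℚ] L)))]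
    (μ : Measure ((Fin e → (L ≃ₐ[ℚ] L)) × (Fin e → (L ≃ₐ[ℚ] L))))
    [μ.IsHaarMeasure] [IsProbabilityMeasure μ] :
    μ (⋂ n, agreeSet e r n) = 0 := by
  have hanti : ∀ n, agreeSet e r (n + 1) ⊆ agreeSet e r n :=
    fun n p hp k hk => hp k (hk.trans n.lt_succ_self)
  have hstep : ∀ n, μ.real (agreeSet e r (n + 1)) ≤
      (1 - ((2 : ℝ) ^ e)⁻¹) * μ.real (agreeSet e r n) := by
    intro n
    obtain ⟨τ, hτ, hτn⟩ := exists_algEquiv_fix_move r hr (Finset.range n) {n}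
      (Finset.singleton_nonempty n) (by simp)
    have hsub := agreeSet_subset_iUnion he r _ hr n τ
      (fun k hk => hτ k (Finset.mem_range.2 hk)) (by simpa using hτn)
    have h1 : μ.real (agreeSet e r n) ≤
        2 ^ e * μ.real (agreeSet e r n \ agreeSet e r (n + 1)) := by
      refine (measureReal_mono hsub).trans ((measureReal_iUnion_fintype_le _).trans ?_)
      simp only [measureReal_def, measure_preimage_mul]
      simp
    rw [measureReal_sdiff (hanti n) (measurableSet_agreeSet e r (n + 1))] at h1
    have h2 : (0 : ℝ) < 2 ^ e := by positivity
    have h3 := mul_le_mul_of_nonneg_left h1 (inv_nonneg.2 h2.le)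
    rw [inv_mul_cancel_left₀ h2.ne'] at h3
    linarith
  have hK : (1 : ℝ) ≤ 2 ^ e := one_le_pow₀ (by norm_num)
  have hc0 : 0 ≤ 1 - ((2 : ℝ) ^ e)⁻¹ := sub_nonneg.2 (inv_le_one_of_one_le₀ hK)
  have hc1 : 1 - ((2 : ℝ) ^ e)⁻¹ < 1 := sub_lt_self _ (by positivity)
  have hgeom : ∀ n, μ.real (agreeSet e r n) ≤ (1 - ((2 : ℝ) ^ e)⁻¹) ^ n := by
    intro n
    induction n with
    | zero => simp
    | succ n ih =>
      rw [pow_succ']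
      exact (hstep n).trans (mul_le_mul_of_nonneg_left ih hc0)
  have hle : μ.real (⋂ n, agreeSet e r n) ≤ 0 :=
    ge_of_tendsto' (tendsto_pow_atTop_nhds_zero_of_lt_one hc0 hc1) fun n =>
      (measureReal_mono (Set.iInter_subset _ n)).trans (hgeom n)
  exact (measureReal_eq_zero_iff (by finiteness)).1 (le_antisymm hle measureReal_nonneg)

/-! ### Conclusion -/

/-- A square root of `a` in `L` lies in the fixed field as soon as some square root does, since
the other one is its negative. -/
theorem exists_sqrt_fixedSubfieldOf_iff {e : ℕ} (σ : Fin e → (L ≃ₐ[ℚ] L)) {x : L} {a : ℚ}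
    (hx : x * x = algebraMap ℚ L a) :
    (∃ y : fixedSubfieldOf σ, y * y = algebraMap ℚ (fixedSubfieldOf σ) a) ↔
      ∀ i, σ i x = x := by
  have hcoe : ((algebraMap ℚ (fixedSubfieldOf σ) a : fixedSubfieldOf σ) : L) =
      algebraMap ℚ L a := by
    rw [eq_ratCast, eq_ratCast]
    exact map_ratCast (fixedSubfieldOf σ).val a
  constructor
  · rintro ⟨y, hy⟩
    have hy' : (y : L) * y = x * x := by
      rw [hx, ← hcoe]
      exact congrArg Subtype.val hy
    have hxy : x ∈ fixedSubfieldOf σ := by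
      rcases mul_self_eq_mul_self_iff.1 hy' with h | h
      · exact h ▸ y.2
      · rw [← neg_eq_iff_eq_neg] at h
        exact h ▸ neg_mem y.2
    exact hxy
  · exact fun h => ⟨⟨x, h⟩, Subtype.ext (hx.trans hcoe.symm)⟩

theorem measure_not_elemEquivOver [IsGalois ℚ L] [IsAlgClosed L] {e : ℕ} (he : 0 < e)
    [MeasurableSpace ((Fin e → (L ≃ₐ[ℚ] L)) × (Fin e → (L ≃ₐ[ℚ] L)))]
    [BorelSpace ((Fin e → (L ≃ₐ[ℚ] L)) × (Fin e → (L ≃ₐ[ℚ] L)))]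
    (μ : Measure ((Fin e → (L ≃ₐ[ℚ] L)) × (Fin e → (L ≃ₐ[ℚ] L))))
    [μ.IsHaarMeasure] [IsProbabilityMeasure μ] :
    μ {p | ¬ElemEquivOver ℚ ↥(fixedSubfieldOf p.1) ↥(fixedSubfieldOf p.2)} = 1 := by
  choose r hr using fun k => IsAlgClosed.exists_eq_mul_self
    (algebraMap ℚ L (Nat.nth Nat.Prime k : ℚ))
  replace hr := fun k => (hr k).symm
  have hsub : {p : (Fin e → (L ≃ₐ[ℚ] L)) × (Fin e → (L ≃ₐ[ℚ] L)) |
      ¬ElemEquivOver ℚ ↥(fixedSubfieldOf p.1) ↥(fixedSubfieldOf p.2)}ᶜ ⊆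
      ⋂ n, agreeSet e r n := by
    intro p hp
    refine Set.mem_iInter.2 fun n k _ => ?_
    rw [← exists_sqrt_fixedSubfieldOf_iff p.1 (hr k),
      ← exists_sqrt_fixedSubfieldOf_iff p.2 (hr k)]
    exact (not_not.1 hp).exists_sqrt_iff _
  rw [← measure_univ (μ := μ)]
  exact measure_eq_measure_of_null_sdiff (Set.subset_univ _)
    (by rw [← Set.compl_eq_univ_sdiff]
        exact measure_mono_null hsub (measure_iInter_agreeSet he r hr μ))

end Core

/-- **Theorem (Statement 12).** For each positive integer `e`, with respect to the Haar
probability measure on `Gal(ℚ)^{2e}`, the set of pairs `(σ, σ′)` such that the fixed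
fields `Q̃(σ)` and `Q̃(σ′)` are not elementarily equivalent (in the language of rings
with a constant for each element of `ℚ`) has measure one. -/
theorem haar_measure_one_nonequivalent_fixed_fields
    (e : ℕ) (he : 0 < e)
    [MeasurableSpace ((Fin e → (AlgebraicClosure ℚ ≃ₐ[ℚ] AlgebraicClosure ℚ)) ×
      (Fin e → (AlgebraicClosure ℚ ≃ₐ[ℚ] AlgebraicClosure ℚ)))]
    [BorelSpace ((Fin e → (AlgebraicClosure ℚ ≃ₐ[ℚ] AlgebraicClosure ℚ)) ×
      (Fin e → (AlgebraicClosure ℚ ≃ₐ[ℚ] AlgebraicClosure ℚ)))]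
    (μ : Measure ((Fin e → (AlgebraicClosure ℚ ≃ₐ[ℚ] AlgebraicClosure ℚ)) ×
      (Fin e → (AlgebraicClosure ℚ ≃ₐ[ℚ] AlgebraicClosure ℚ))))
    [μ.IsHaarMeasure] [IsProbabilityMeasure μ] :
    μ {p : (Fin e → (AlgebraicClosure ℚ ≃ₐ[ℚ] AlgebraicClosure ℚ)) ×
        (Fin e → (AlgebraicClosure ℚ ≃ₐ[ℚ] AlgebraicClosure ℚ)) |
      ¬ElemEquivOver ℚ ↥(fixedSubfieldOf p.1) ↥(fixedSubfieldOf p.2)} = 1 := by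
  have hgal : IsGalois ℚ (AlgebraicClosure ℚ) := by
    -- The `ℚ`-algebra structure here comes from characteristic zero, not from the construction
    -- of the algebraic closure; the two agree since `Algebra ℚ _` is a subsingleton.
    have h : ∀ (k : Type) [Field k] [CharZero k], IsGalois k (AlgebraicClosure k) :=
      fun _ => inferInstance
    convert h ℚ
    exact Subsingleton.elim _ _
  exact measure_not_elemEquivOver he μ
end

section
/- Let L/K be a Galois extension whose Galois group Gal(L/K) is infinite of exponent dividing 2, and let e be a positive integer. For σ = (σ₁,…,σ_e) ∈ Gal(L/K)^e let L(σ) denote the fixed field of σ₁,…,σ_e in L. Then the set of fields {L(σ) : σ ∈ Gal(L/K)^e} is uncountable. -/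
/-- If a compact Hausdorff group were countable, Baire would make one of its points open; by
homogeneity it would be discrete, hence finite. -/
lemma uncountable_of_infinite_compact_group (G : Type*) [Group G] [TopologicalSpace G]
    [IsTopologicalGroup G] [CompactSpace G] [T2Space G] [Infinite G] : Uncountable G := by
  by_contra h
  rw [not_uncountable_iff] at h
  obtain ⟨g, hg⟩ := nonempty_interior_of_iUnion_of_closed (f := fun g : G => ({g} : Set G))
    (fun g => isClosed_singleton) (Set.iUnion_of_singleton G)
  have hopen : IsOpen ({g} : Set G) := by
    rcases Set.subset_singleton_iff_eq.1 (interior_subset (s := ({g} : Set G))) with h0 | h1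
    · exact absurd h0 hg.ne_empty
    · exact interior_eq_iff_isOpen.1 h1
  have h1 : IsOpen ({1} : Set G) := by
    have := (Homeomorph.mulLeft g).isOpen_preimage.2 hopen
    convert this using 1
    ext x
    simp
  have : DiscreteTopology G := discreteTopology_of_isOpen_singleton_one h1
  have : Finite G := finite_of_compact_of_discrete
  exact not_finite G

lemma mem_zpowers_iff_of_mul_self {G : Type*} [Group G] {τ : G} (h : τ * τ = 1) (x : G) :
    x ∈ Subgroup.zpowers τ ↔ x = 1 ∨ x = τ := by
  constructor
  · rintro ⟨n, rfl⟩
    have h2 : τ ^ (2 : ℤ) = 1 := by rw [zpow_two, h]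
    rcases Int.even_or_odd' n with ⟨k, rfl | rfl⟩
    · left
      simp [zpow_mul, h2]
    · right
      simp [zpow_add, zpow_mul, h2]
  · rintro (rfl | rfl)
    · exact one_mem _
    · exact Subgroup.mem_zpowers _

lemma fixedSubfieldOf_const {K L : Type*} [Field K] [Field L] [Algebra K L] {e : ℕ}
    (he : 0 < e) (τ : L ≃ₐ[K] L) :
    fixedSubfieldOf (fun _ : Fin e => τ) =
      IntermediateField.fixedField (Subgroup.zpowers τ) := by
  ext x
  rw [IntermediateField.mem_fixedField_iff]
  constructor
  · intro hx
    have hτ : τ ∈ MulAction.stabilizer (L ≃ₐ[K] L) x := hx ⟨0, he⟩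
    exact fun f hf => (Subgroup.zpowers_le.2 hτ) hf
  · exact fun hx _ => hx τ (Subgroup.mem_zpowers τ)

lemma fixedSubfieldOf_const_injective {K L : Type*} [Field K] [Field L] [Algebra K L]
    [IsGalois K L] (hexp : ∀ τ : L ≃ₐ[K] L, τ * τ = 1) {e : ℕ} (he : 0 < e) :
    Function.Injective fun τ : L ≃ₐ[K] L => fixedSubfieldOf (fun _ : Fin e => τ) := by
  have key (τ : L ≃ₐ[K] L) :
      (fixedSubfieldOf (fun _ : Fin e => τ)).fixingSubgroup = Subgroup.zpowers τ := by
    have hfin : (Subgroup.zpowers τ : Set (L ≃ₐ[K] L)).Finite :=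
      (Set.toFinite {1, τ}).subset fun x hx => (mem_zpowers_iff_of_mul_self (hexp τ) x).1 hx
    rw [fixedSubfieldOf_const he]
    exact InfiniteGalois.fixingSubgroup_fixedField ⟨Subgroup.zpowers τ, hfin.isClosed⟩
  intro σ τ hστ
  have hz : Subgroup.zpowers σ = Subgroup.zpowers τ := by
    rw [← key σ, ← key τ]
    exact congrArg IntermediateField.fixingSubgroup hστ
  have hσ := (mem_zpowers_iff_of_mul_self (hexp τ) σ).1 (hz ▸ Subgroup.mem_zpowers σ)
  have hτ := (mem_zpowers_iff_of_mul_self (hexp σ) τ).1 (hz ▸ Subgroup.mem_zpowers τ)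
  rcases hσ with hσ | hσ
  · rcases hτ with hτ | hτ
    · rw [hσ, hτ]
    · exact hτ.symm
  · exact hσ

/-- **Lemma (Statement 14).** Let `L/K` be a Galois extension whose Galois group is
infinite of exponent dividing `2`, and let `e` be a positive integer.  Then the set of
fixed fields `L(σ)` of `e`-tuples `σ ∈ Gal(L/K)^e` is uncountable. -/
theorem uncountably_many_fixed_fields_of_infinite_exponent_two_galois
    (K L : Type*) [Field K] [Field L] [Algebra K L] [IsGalois K L]
    [Infinite (L ≃ₐ[K] L)] (hexp : ∀ τ : L ≃ₐ[K] L, τ * τ = 1)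
    (e : ℕ) (he : 0 < e) :
    ¬(Set.range fun σ : Fin e → (L ≃ₐ[K] L) => fixedSubfieldOf σ).Countable := by
  intro hc
  have := uncountable_of_infinite_compact_group (L ≃ₐ[K] L)
  have hsub : (Set.range fun τ : L ≃ₐ[K] L => fixedSubfieldOf (fun _ : Fin e => τ)).Countable :=
    hc.mono (by rintro _ ⟨τ, rfl⟩; exact ⟨fun _ => τ, rfl⟩)
  have hcount : (Set.univ : Set (L ≃ₐ[K] L)).Countable :=
    Set.countable_of_injective_of_countable_image
      (fixedSubfieldOf_const_injective hexp he).injOn (by rwa [Set.image_univ])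
  exact Set.not_countable_univ hcount
end

section
/- Let Ω/K be a field extension, let N be an intermediate field of Ω/K having exactly s intermediate fields E with K ⊊ E ⊆ N, and let L₁,…,L_{s+1} be intermediate fields of Ω/K such that Lᵢ ∩ Lⱼ = K for all i ≠ j. Then there exists an index i with Lᵢ ∩ N = K. -/
/-- **Lemma (Statement 15).** Let `Ω/K` be a field extension, let `N` be an intermediate
field of `Ω/K` having exactly `s` intermediate fields `E` with `K ⊊ E ⊆ N`, and let
`L₁, …, L_{s+1}` be intermediate fields of `Ω/K` with `Lᵢ ∩ Lⱼ = K` for all `i ≠ j`.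
Then `Lᵢ ∩ N = K` for some `i`. -/
theorem exists_trivial_intersection_of_pairwise_trivial
    (K Ω : Type*) [Field K] [Field Ω] [Algebra K Ω]
    (N : IntermediateField K Ω) (s : ℕ)
    (hfin : {E : IntermediateField K Ω | ⊥ < E ∧ E ≤ N}.Finite)
    (hcard : {E : IntermediateField K Ω | ⊥ < E ∧ E ≤ N}.ncard = s)
    (L : Fin (s + 1) → IntermediateField K Ω)
    (hdisj : ∀ i j, i ≠ j → L i ⊓ L j = ⊥) :
    ∃ i, L i ⊓ N = ⊥ := by
  by_contra! h
  -- Pigeonhole: `i ↦ L i ⊓ N` maps `s + 1` indices into a set of `s` nontrivial subfields of `N`.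
  obtain ⟨i, -, j, -, hij, heq⟩ :=
    Finset.exists_ne_map_eq_of_card_lt_of_maps_to (s := Finset.univ) (t := hfin.toFinset)
      (f := fun i => L i ⊓ N)
      (by rw [← Set.ncard_eq_toFinset_card _ hfin, hcard]; simp)
      (fun i _ => by simpa using bot_lt_iff_ne_bot.mpr (h i))
  -- The common value lies in `L i ⊓ L j`, which is trivial.
  have hle : L i ⊓ N ≤ L i ⊓ L j := le_inf inf_le_left (heq.le.trans inf_le_left)
  exact h i (le_bot_iff.mp (hle.trans (hdisj i j hij).le))
end
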